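/- Let G be a finite simple graph on n ≥ 36 vertices with minimum degree at least 6 that contains no subgraph isomorphic to the complete graph K₇. Suppose that for every subset S of V(G) with |S| ≥ 2 the inequality 3a₁ + 2a₃ + a₅ + 4 ≤ 4|S| holds, where, for i ∈ {1, 3, 5}, aᵢ denotes the number of connected components of G∖S having exactly i vertices. Then G has a matching of size at least (3n + 4)/7; equivalently, there is a matching M of G with 7|M| ≥ 3n + 4. -/

import Mathlib

open SimpleGraph

/-!
Write `odd (G - S)` for the number of odd components of `G - S`. The Tutte–Berge formula provides
a matching `M` and a set `S` with `n + |S| ≤ 2|M| + odd (G - S)`, so it suffices to show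
`7 odd (G - S) + 8 ≤ n + 7|S|`. If `|S| ≥ 2`, counting the vertices of the odd components gives
`7 odd (G - S) ≤ n - |S| + 6a₁ + 4a₃ + 2a₅`, and the last three terms are at most `8|S| - 8`. If
`|S| = 1`, every component of `G - S` has at least 6 vertices, hence every odd one at least 7. If
`S = ∅`, a component of order 7 would be a `K₇`, so the odd components have at least 9 vertices,
and `7n / 9 + 8 ≤ n` because `n ≥ 36`.

The Tutte–Berge formula is obtained by applying Tutte's theorem to the join of `G` with a complete
graph on `d = max (odd (G - S) - |S|)` vertices: restricted to `G`, a perfect matching of the join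
misses at most `d` vertices.
-/

section OddComponents

variable {V W : Type*} {G : SimpleGraph V} {H : SimpleGraph W}

/-- The vertices that an embedding of graphs maps into `T` induce the same graph as `T`, provided
`T` lies in the range of the embedding. -/
noncomputable def inducePreimageIso (f : G ↪g H) {T : Set W} (hT : T ⊆ Set.range f) :
    G.induce (f ⁻¹' T) ≃g H.induce T where
  toEquiv := Equiv.ofBijective (T.restrictPreimage f)
    ⟨f.injective.restrictPreimage T, fun ⟨w, hw⟩ ↦ by
      obtain ⟨v, rfl⟩ := hT hw
      exact ⟨⟨v, hw⟩, rfl⟩⟩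
  map_rel_iff' := f.map_adj_iff

lemma ncard_oddComponents_eq_of_iso (φ : G ≃g H) :
    G.oddComponents.ncard = H.oddComponents.ncard :=
  Nat.card_congr <| φ.connectedComponentEquiv.subtypeEquiv fun c ↦ by
    simp only [Set.mem_ofPred_eq, ← Nat.card_coe_set_eq,
      Nat.card_congr (ConnectedComponent.isoEquivSupp φ c)]

lemma ncard_oddComponents_le_one (hG : G.Preconnected) : G.oddComponents.ncard ≤ 1 :=
  have := hG.subsingleton_connectedComponent
  Set.ncard_le_one_of_subsingleton _

lemma isTutteViolator_iff_ncard_lt {S : Set V} :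
    G.IsTutteViolator S ↔ S.ncard < (G.induce Sᶜ).oddComponents.ncard := by
  let φ : ((⊤ : G.Subgraph).deleteVerts S).coe ≃g G.induce Sᶜ :=
    { toEquiv := Equiv.setCongr (by simp [Set.compl_eq_univ_sdiff])
      map_rel_iff' := fun {a b} ↦ by simp [show a.1 ∉ S from a.2.2, show b.1 ∉ S from b.2.2] }
  rw [IsTutteViolator, ncard_oddComponents_eq_of_iso φ]

lemma even_ncard_oddComponents_add_ncard [Finite V] (G : SimpleGraph V) (S : Set V) :
    Even ((G.induce Sᶜ).oddComponents.ncard + S.ncard) ↔ Even (Nat.card V) := by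
  have hparity := (G.induce Sᶜ).odd_ncard_oddComponents
  rw [Nat.card_coe_set_eq] at hparity
  rw [← Set.ncard_add_ncard_compl S, Nat.even_add', Nat.even_add', hparity,
    iff_comm (a := Odd S.ncard)]

lemma sum_ncard_supp_eq_card [Finite V] (G : SimpleGraph V) [Fintype G.ConnectedComponent] :
    ∑ c : G.ConnectedComponent, c.supp.ncard = Nat.card V := by
  rw [← Nat.card_congr (Equiv.sigmaFiberEquiv G.connectedComponentMk), Nat.card_sigma]
  rfl

-- An odd component with `i < k` vertices falls short of `k` by `k - i`.
lemma mul_ncard_oddComponents_le_card_add_sum [Finite V] (G : SimpleGraph V) (k : ℕ) :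
    k * G.oddComponents.ncard ≤ Nat.card V +
      ∑ i ∈ Finset.range k with Odd i,
        (k - i) * {c : G.ConnectedComponent | c.supp.ncard = i}.ncard := by
  classical
  have := Fintype.ofFinite G.ConnectedComponent
  have hncard (p : G.ConnectedComponent → Prop) : {c | p c}.ncard = ∑ c, if p c then 1 else 0 := by
    rw [← Finset.coe_filter_univ, Set.ncard_coe_finset, Finset.card_filter]
  simp only [hncard, ← sum_ncard_supp_eq_card G, Finset.mul_sum, mul_ite, mul_one, mul_zero]
  rw [Finset.sum_comm, ← Finset.sum_add_distrib]
  refine Finset.sum_le_sum fun c _ ↦ ?_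
  simp only [Finset.sum_ite_eq, Finset.mem_filter, Finset.mem_range]
  split_ifs <;> grind

lemma seven_mul_ncard_oddComponents_le [Finite V] (G : SimpleGraph V) :
    7 * G.oddComponents.ncard ≤ Nat.card V
      + 6 * {c : G.ConnectedComponent | c.supp.ncard = 1}.ncard
      + 4 * {c : G.ConnectedComponent | c.supp.ncard = 3}.ncard
      + 2 * {c : G.ConnectedComponent | c.supp.ncard = 5}.ncard := by
  have hodd : {i ∈ Finset.range 7 | Odd i} = {1, 3, 5} := by decide
  simpa [hodd, add_assoc] using mul_ncard_oddComponents_le_card_add_sum G 7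

lemma mul_ncard_oddComponents_le_card [Finite V] {k : ℕ}
    (hk : ∀ c ∈ G.oddComponents, k ≤ c.supp.ncard) :
    k * G.oddComponents.ncard ≤ Nat.card V := by
  refine (mul_ncard_oddComponents_le_card_add_sum G k).trans_eq ?_
  rw [Finset.sum_eq_zero, add_zero]
  intro i hi
  obtain ⟨hik, hodd⟩ := Finset.mem_filter.mp hi
  have hempty : {c : G.ConnectedComponent | c.supp.ncard = i} = ∅ := by
    refine Set.eq_empty_of_forall_notMem ?_
    rintro c rfl
    exact (hk c hodd).not_gt (Finset.mem_range.mp hik)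
  rw [hempty, Set.ncard_empty, mul_zero]

end OddComponents

section Matching

variable {V W : Type*} {G : SimpleGraph V} {H : SimpleGraph W}

lemma two_mul_ncard_edgeSet_of_isMatching [Finite V] {M : G.Subgraph} (hM : M.IsMatching) :
    2 * M.edgeSet.ncard = M.verts.ncard := by
  classical
  have := Fintype.ofFinite V
  have hdegree (v : V) : M.spanningCoe.degree v = if v ∈ M.verts then 1 else 0 := by
    rw [Subgraph.degree_spanningCoe]
    split_ifs with hv
    · exact Subgraph.isMatching_iff_forall_degree.mp hM v hv
    · exact Subgraph.degree_of_notMem_verts hv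
  calc 2 * M.edgeSet.ncard = ∑ v, M.spanningCoe.degree v := by
        rw [sum_degrees_eq_twice_card_edges, ← Subgraph.edgeSet_spanningCoe,
          Set.ncard_eq_toFinset_card', edgeFinset]
    _ = M.verts.ncard := by
        simp only [hdegree, Finset.sum_boole, Nat.cast_id, ← Set.ncard_coe_finset,
          Finset.coe_filter_univ, Set.ofPred_mem_eq]

lemma exists_isMatching_of_embedding [Finite W] (f : G ↪g H) {M : H.Subgraph}
    (hM : M.IsPerfectMatching) :
    ∃ N : G.Subgraph, N.IsMatching ∧ Nat.card V ≤ N.verts.ncard + (Set.range f)ᶜ.ncard := by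
  have := Finite.of_injective f f.injective
  let N : G.Subgraph :=
    { verts := {v | ∃ w, M.Adj (f v) (f w)}
      Adj v w := M.Adj (f v) (f w)
      adj_sub h := f.map_adj_iff.mp (M.adj_sub h)
      edge_vert h := ⟨_, h⟩
      symm := ⟨fun _ _ h ↦ h.symm⟩ }
  refine ⟨N, fun v ⟨w, hw⟩ ↦ ⟨w, hw, fun y hy ↦ f.injective (hM.1.eq_of_adj_left hy hw)⟩, ?_⟩
  choose partner hpartner using fun v ↦ (hM.1 (hM.2 (f v))).exists
  have hmaps : ∀ v ∈ N.vertsᶜ, partner v ∈ (Set.range f)ᶜ := by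
    rintro v hv ⟨w, hw⟩
    exact hv ⟨w, hw ▸ hpartner v⟩
  have hinj : partner.Injective := fun a b hab ↦
    f.injective (hM.1.eq_of_adj_right (hpartner a) (hab ▸ hpartner b))
  have hle := Set.ncard_le_ncard_of_injOn partner hmaps hinj.injOn
  rw [← Set.ncard_add_ncard_compl N.verts]
  lia

end Matching

section TutteBerge

variable {V W : Type*}

/-- The join of two graphs: their disjoint union together with all edges between them. -/
def graphJoin (G : SimpleGraph V) (H : SimpleGraph W) : SimpleGraph (V ⊕ W) :=
  (G ⊕g H) ⊔ completeBipartiteGraph V W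

/-- The left summand as an induced subgraph of the join. -/
def graphJoinInl (G : SimpleGraph V) (H : SimpleGraph W) : G ↪g graphJoin G H where
  toEmbedding := .inl
  map_rel_iff' := by simp [graphJoin]

lemma isUniversal_graphJoin_inr (G : SimpleGraph V) (w : W) :
    (graphJoin G (⊤ : SimpleGraph W)).IsUniversal (.inr w) := by
  rintro (v | w') h <;> simp_all [graphJoin]

lemma not_isTutteViolator_graphJoin_top [Finite V] [Finite W] {G : SimpleGraph V}
    (heven : Even (Nat.card V + Nat.card W))
    (hG : ∀ S : Set V, (G.induce Sᶜ).oddComponents.ncard ≤ S.ncard + Nat.card W)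
    (U : Set (V ⊕ W)) : ¬ (graphJoin G (⊤ : SimpleGraph W)).IsTutteViolator U := by
  rw [isTutteViolator_iff_ncard_lt, not_lt]
  by_cases hU : Uᶜ ⊆ Set.range Sum.inl
  · have hodd : (G.induce (Sum.inl ⁻¹' U)ᶜ).oddComponents.ncard =
        ((graphJoin G (⊤ : SimpleGraph W)).induce Uᶜ).oddComponents.ncard :=
      ncard_oddComponents_eq_of_iso (inducePreimageIso (graphJoinInl G ⊤) hU)
    have hcompl : (Sum.inl ⁻¹' U)ᶜ.ncard = Uᶜ.ncard :=
      Set.ncard_preimage_of_injective_subset_range Sum.inl_injective hU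
    have hcardU := Set.ncard_add_ncard_compl U
    have hcardV := Set.ncard_add_ncard_compl (Sum.inl ⁻¹' U)
    have hle := hG (Sum.inl ⁻¹' U)
    rw [Nat.card_sum] at hcardU
    lia
  · obtain ⟨v | w, hwU, hw⟩ := Set.not_subset.mp hU
    · exact absurd ⟨v, rfl⟩ hw
    have huniv : ((graphJoin G (⊤ : SimpleGraph W)).induce Uᶜ).IsUniversal ⟨.inr w, hwU⟩ :=
      fun _ hne ↦ isUniversal_graphJoin_inr G w (Subtype.coe_ne_coe.mpr hne)
    have hle := ncard_oddComponents_le_one (Connected.of_isUniversal huniv).preconnected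
    have hparity := (even_ncard_oddComponents_add_ncard (graphJoin G (⊤ : SimpleGraph W)) U).mpr
      (by rwa [Nat.card_sum])
    by_contra! hlt
    have hone : ((graphJoin G (⊤ : SimpleGraph W)).induce Uᶜ).oddComponents.ncard + U.ncard =
        1 := by lia
    exact Nat.not_even_one (hone ▸ hparity)

/-- The nontrivial inequality of the Tutte–Berge formula. -/
theorem exists_isMatching_card_add_ncard_le [Finite V] (G : SimpleGraph V) :
    ∃ (M : G.Subgraph) (S : Set V), M.IsMatching ∧
      Nat.card V + S.ncard ≤ 2 * M.edgeSet.ncard + (G.induce Sᶜ).oddComponents.ncard := by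
  obtain ⟨S, hS⟩ := Finite.exists_max
    fun S : Set V ↦ ((G.induce Sᶜ).oddComponents.ncard : ℤ) - S.ncard
  obtain ⟨d, hd⟩ : ∃ d, (G.induce Sᶜ).oddComponents.ncard = S.ncard + d := by
    refine Nat.exists_eq_add_of_le ?_
    have := hS ∅
    rw [Set.ncard_empty] at this
    lia
  have hparity := even_ncard_oddComponents_add_ncard G S
  obtain ⟨M, hM⟩ := tutte.mpr <| not_isTutteViolator_graphJoin_top (G := G) (W := Fin d)
    (by rw [Nat.card_fin]; grind) (fun T ↦ by have := hS T; rw [Nat.card_fin]; lia)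
  obtain ⟨N, hN, hcard⟩ := exists_isMatching_of_embedding (graphJoinInl G ⊤) hM
  have hrange : (Set.range (graphJoinInl G (⊤ : SimpleGraph (Fin d))))ᶜ.ncard = d := by
    change (Set.range (Sum.inl : V → V ⊕ Fin d))ᶜ.ncard = d
    rw [Set.compl_range_inl, ← Set.image_univ, Set.ncard_image_of_injective _ Sum.inr_injective,
      Set.ncard_univ, Nat.card_fin]
  refine ⟨N, S, hN, ?_⟩
  rw [two_mul_ncard_edgeSet_of_isMatching hN]
  lia

end TutteBerge

section Degree

variable {V : Type*} [Fintype V] {G : SimpleGraph V} [DecidableRel G.Adj] {k : ℕ}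

lemma degree_induce_supp (c : G.ConnectedComponent) [DecidablePred (· ∈ c.supp)] (v : c.supp) :
    (G.induce c.supp).degree v = G.degree v :=
  degree_induce_of_neighborSet_subset fun _ hw ↦ c.mem_supp_of_adj_mem_supp v.2 hw

lemma lt_ncard_supp (hδ : ∀ v, k ≤ G.degree v) (c : G.ConnectedComponent) :
    k < c.supp.ncard := by
  classical
  obtain ⟨v, hv⟩ := c.nonempty_supp
  have hlt := (G.induce c.supp).degree_lt_card_verts ⟨v, hv⟩
  rw [degree_induce_supp, ← Nat.card_eq_fintype_card, Nat.card_coe_set_eq] at hlt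
  exact (hδ v).trans_lt hlt

lemma add_one_lt_ncard_supp_of_cliqueFree (hδ : ∀ v, k ≤ G.degree v) (hG : G.CliqueFree (k + 1))
    (c : G.ConnectedComponent) : k + 1 < c.supp.ncard := by
  classical
  refine (Nat.succ_le_of_lt (lt_ncard_supp hδ c)).lt_of_ne' fun hc ↦
    hG c.supp.toFinset ⟨?_, by rw [← Set.ncard_eq_toFinset_card', hc]⟩
  rw [Set.coe_toFinset, ← induce_eq_top, eq_top_iff_forall_isUniversal]
  intro v
  have hlt := (G.induce c.supp).degree_lt_card_verts v
  have hv := hδ v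
  rw [← degree_eq_card_sub_one]
  rw [← degree_induce_supp c v] at hv
  rw [← Nat.card_eq_fintype_card, Nat.card_coe_set_eq] at hlt ⊢
  lia

lemma degree_le_degree_induce_compl_add_ncard (S : Set V) [DecidablePred (· ∈ Sᶜ)]
    (v : (Sᶜ : Set V)) : G.degree v ≤ (G.induce Sᶜ).degree v + S.ncard := by
  have hsub : G.neighborSet v ⊆ Subtype.val '' (G.induce Sᶜ).neighborSet v ∪ S := by
    intro w hw
    by_cases hwS : w ∈ S
    · exact .inr hwS
    · exact .inl ⟨⟨w, hwS⟩, hw, rfl⟩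
  have hle := (Set.ncard_le_ncard hsub).trans (Set.ncard_union_le _ _)
  rw [Set.ncard_image_of_injective _ Subtype.val_injective] at hle
  simpa only [← Nat.card_coe_set_eq, Nat.card_eq_fintype_card, card_neighborSet_eq_degree] using hle

lemma lt_ncard_add_ncard_supp_induce_compl (hδ : ∀ v, k ≤ G.degree v) (S : Set V)
    (c : (G.induce Sᶜ).ConnectedComponent) : k < S.ncard + c.supp.ncard := by
  classical
  have hδS (v : (Sᶜ : Set V)) : k - S.ncard ≤ (G.induce Sᶜ).degree v :=
    Nat.sub_le_of_le_add ((hδ v).trans (degree_le_degree_induce_compl_add_ncard S v))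
  have := lt_ncard_supp hδS c
  lia

lemma add_three_mul_ncard_oddComponents_le_card (hk : Even k) (hδ : ∀ v, k ≤ G.degree v)
    (hG : G.CliqueFree (k + 1)) : (k + 3) * G.oddComponents.ncard ≤ Nat.card V := by
  refine mul_ncard_oddComponents_le_card fun c (hc : Odd _) ↦ ?_
  have := add_one_lt_ncard_supp_of_cliqueFree hδ hG c
  grind

end Degree

/-- Proposition 1: let `G` be a finite simple graph on `n ≥ 36` vertices with minimum degree at
least 6 and with no `K₇` subgraph. If for every `S ⊆ V(G)` with `|S| ≥ 2` the inequality
`3a₁ + 2a₃ + a₅ + 4 ≤ 4|S|` holds, where `aᵢ` is the number of components of `G ∖ S` with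
exactly `i` vertices, then `G` has a matching `M` with `7|M| ≥ 3n + 4`. -/
theorem stmt_10 {V : Type*} [Fintype V] (G : SimpleGraph V) [DecidableRel G.Adj]
    (hn : 36 ≤ Fintype.card V)
    (hδ : ∀ v : V, 6 ≤ G.degree v)
    (hK7 : G.CliqueFree 7)
    (h : ∀ S : Set V, 2 ≤ S.ncard →
      3 * {c : (G.induce (Sᶜ : Set V)).ConnectedComponent | c.supp.ncard = 1}.ncard
        + 2 * {c : (G.induce (Sᶜ : Set V)).ConnectedComponent | c.supp.ncard = 3}.ncard
        + {c : (G.induce (Sᶜ : Set V)).ConnectedComponent | c.supp.ncard = 5}.ncard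
        + 4 ≤ 4 * S.ncard) :
    ∃ M : G.Subgraph, M.IsMatching ∧ 3 * Fintype.card V + 4 ≤ 7 * M.edgeSet.ncard := by
  obtain ⟨M, S, hM, hMS⟩ := exists_isMatching_card_add_ncard_le G
  have hS : 7 * (G.induce Sᶜ).oddComponents.ncard + 8 ≤ Nat.card V + 7 * S.ncard := by
    have hcompl := Set.ncard_add_ncard_compl S
    obtain hS | hS | hS : S.ncard = 0 ∨ S.ncard = 1 ∨ 2 ≤ S.ncard := by lia
    · obtain rfl := (Set.ncard_eq_zero).mp hS
      have hcount := add_three_mul_ncard_oddComponents_le_card (by decide) hδ hK7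
      rw [Set.compl_empty, ncard_oddComponents_eq_of_iso (induceUnivIso G)]
      rw [← Nat.card_eq_fintype_card] at hn
      lia
    · have hseven (c) (hc : c ∈ (G.induce Sᶜ).oddComponents) : 7 ≤ c.supp.ncard := by
        have := lt_ncard_add_ncard_supp_induce_compl hδ S c
        grind
      have hcount := mul_ncard_oddComponents_le_card hseven
      rw [Nat.card_coe_set_eq] at hcount
      lia
    · have hcount := seven_mul_ncard_oddComponents_le (G.induce Sᶜ)
      have hsmall := h S hS
      rw [Nat.card_coe_set_eq] at hcount
      lia
  rw [← Nat.card_eq_fintype_card]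
  exact ⟨M, hM, by lia⟩
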